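/- Let p, q ∈ Φ with p ≠ q, and let n(p), n(q) ∈ ℕ^d be their level vectors. If there exists a coordinate k with n_k(p) > n_k(q), or if n(p) = n(q), then the hierarchical hat function of p vanishes at q: φ_p(q) = 0. In particular, φ_p vanishes at every point in the hierarchical chain of ancestors of p, all the way back to the origin. -/

import Mathlib

/-- The one-dimensional sparse grid level sets: `Γ(n) = ∅` for `n < 0`, `Γ(0) = {0}`,
and `Γ(n) = {2^{1-n} j : j ∈ ℤ, |j| ≤ 2^{n-1}}` for `n ≥ 1`. -/
def sgLevel (n : ℤ) : Set ℝ :=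
  if n < 0 then ∅
  else if n = 0 then {0}
  else {x | ∃ j : ℤ, |j| ≤ 2 ^ (n - 1).toNat ∧ x = (2 : ℝ) ^ (1 - n) * (j : ℝ)}

/-- The tensor grid `Γ(𝐧) = Γ(n₁) × ⋯ × Γ(n_d)`. -/
def tensorGrid (d : ℕ) (nv : Fin d → ℤ) : Set (Fin d → ℝ) :=
  {x | ∀ k, x k ∈ sgLevel (nv k)}

/-- `Φ = ⋃_{𝐧 ∈ ℤ^d} Γ(𝐧)`. -/
def sgPoints (d : ℕ) : Set (Fin d → ℝ) :=
  ⋃ nv : Fin d → ℤ, tensorGrid d nv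

/-- The level of a coordinate: `lvl(t) = min {n ≥ 0 : t ∈ Γ(n)}`. -/
noncomputable def lvl (t : ℝ) : ℕ :=
  sInf {n : ℕ | t ∈ sgLevel (n : ℤ)}

/-- One-dimensional hat functions: `φ̂_{p,0} ≡ 1`, and for `n ≥ 1`,
`φ̂_{p,n}(x) = max(0, 1 - 2^{n-1}|x - p|)`. -/
def hat1 (p : ℝ) (n : ℕ) (x : ℝ) : ℝ :=
  if n = 0 then 1 else max 0 (1 - 2 ^ (n - 1) * |x - p|)

/-- The hierarchical hat function of `p ∈ Φ`: `φ_p(x) = Π_k φ̂_{p_k, n_k(p)}(x_k)`. -/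
noncomputable def hierHat (d : ℕ) (p x : Fin d → ℝ) : ℝ :=
  ∏ k, hat1 (p k) (lvl (p k)) (x k)

theorem mem_sgLevel_lvl {t : ℝ} {m : ℤ} (ht : t ∈ sgLevel m) : t ∈ sgLevel (lvl t : ℤ) := by
  have hm : 0 ≤ m := by
    by_contra! hm
    simp [sgLevel, hm] at ht
  lift m to ℕ using hm
  exact Nat.sInf_mem (s := {n : ℕ | t ∈ sgLevel (n : ℤ)}) ⟨m, ht⟩

theorem eq_zero_of_mem_sgLevel_zero {t : ℝ} (ht : t ∈ sgLevel 0) : t = 0 := by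
  simpa [sgLevel] using ht

/-- Points of level at most `n + 1` are integer multiples of `2^{-n}`. -/
theorem exists_int_of_mem_sgLevel {t : ℝ} {m n : ℕ} (ht : t ∈ sgLevel (m : ℤ))
    (hmn : m ≤ n + 1) : ∃ j : ℤ, 2 ^ n * t = j := by
  rcases m with _ | m
  · exact ⟨0, by simp [eq_zero_of_mem_sgLevel_zero ht]⟩
  · have hneg : ¬ ((m + 1 : ℕ) : ℤ) < 0 := by omega
    have hne : ((m + 1 : ℕ) : ℤ) ≠ 0 := by omega
    simp only [sgLevel, if_neg hneg, if_neg hne, Set.mem_ofPred_eq] at ht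
    obtain ⟨j, -, rfl⟩ := ht
    obtain ⟨c, rfl⟩ := Nat.exists_eq_add_of_le (Nat.le_of_succ_le_succ hmn)
    refine ⟨2 ^ c * j, ?_⟩
    have hexp : (1 : ℤ) - ((m + 1 : ℕ) : ℤ) = -(m : ℤ) := by push_cast; ring
    rw [hexp, zpow_neg, zpow_natCast, pow_add]
    push_cast
    field_simp

/-- A hat function vanishes at every other grid point of no higher level. -/
theorem hat1_eq_zero {s t : ℝ} {m n : ℕ} (hs : s ∈ sgLevel (n : ℤ)) (ht : t ∈ sgLevel (m : ℤ))
    (hmn : m ≤ n) (hst : s ≠ t) : hat1 s n t = 0 := by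
  rcases n with _ | n
  · obtain rfl : m = 0 := by omega
    exact absurd ((eq_zero_of_mem_sgLevel_zero hs).trans
      (eq_zero_of_mem_sgLevel_zero ht).symm) hst
  · obtain ⟨a, ha⟩ := exists_int_of_mem_sgLevel hs le_rfl
    obtain ⟨b, hb⟩ := exists_int_of_mem_sgLevel ht hmn
    have hscale : (2 : ℝ) ^ n * |t - s| = ((|b - a| : ℤ) : ℝ) := by
      push_cast
      rw [← ha, ← hb, ← mul_sub, abs_mul, abs_of_pos (by positivity : (0 : ℝ) < 2 ^ n)]
    have hab : b - a ≠ 0 := by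
      intro hab
      have hzero : (2 : ℝ) ^ n * |t - s| = 0 := by rw [hscale, hab]; simp
      rcases mul_eq_zero.mp hzero with h | h
      · exact absurd h (by positivity)
      · exact hst (sub_eq_zero.mp (abs_eq_zero.mp h)).symm
    have hone : (1 : ℝ) ≤ 2 ^ n * |t - s| := by
      rw [hscale]
      exact_mod_cast Int.one_le_abs hab
    simp only [hat1, Nat.succ_ne_zero, if_false, Nat.add_sub_cancel]
    exact max_eq_left (by linarith)

/-- Let `p, q ∈ Φ`, `p ≠ q`, with level vectors `n(p), n(q)`. If some coordinate `k`
satisfies `n_k(p) > n_k(q)`, or if `n(p) = n(q)`, then `φ_p(q) = 0`. -/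
theorem hierHat_vanishes (d : ℕ) (p q : Fin d → ℝ)
    (hp : p ∈ sgPoints d) (hq : q ∈ sgPoints d) (hpq : p ≠ q)
    (h : (∃ k, lvl (q k) < lvl (p k)) ∨ ∀ k, lvl (p k) = lvl (q k)) :
    hierHat d p q = 0 := by
  obtain ⟨np, hnp⟩ := Set.mem_iUnion.mp hp
  obtain ⟨nq, hnq⟩ := Set.mem_iUnion.mp hq
  have key : ∃ k, lvl (q k) ≤ lvl (p k) ∧ p k ≠ q k := by
    rcases h with ⟨k, hk⟩ | h
    · exact ⟨k, hk.le, fun heq => hk.ne (by rw [heq])⟩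
    · obtain ⟨k, hk⟩ := Function.ne_iff.mp hpq
      exact ⟨k, (h k).ge, hk⟩
  obtain ⟨k, hle, hne⟩ := key
  exact Finset.prod_eq_zero (Finset.mem_univ k)
    (hat1_eq_zero (mem_sgLevel_lvl (hnp k)) (mem_sgLevel_lvl (hnq k)) hle hne)
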